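/- arXiv:0907.1792 — 2 statements merged into one kernel-verified Lean document; each statement's English description precedes it below -/
import Mathlib

section
/- Let E be a positive operator measure on the Borel sets of ℝ with values in the bounded operators on L²(ℝ) satisfying translation covariance, e^{-itP} E(B) e^{itP} = E(B+t) for all Borel B and t ∈ ℝ, where (e^{-itP}ψ)(x) := ψ(x−t), and velocity boost invariance, e^{itQ} E(B) e^{-itQ} = E(B) for all B and t, where e^{itQ} is multiplication by x ↦ e^{itx}. Let T : ℝ → ℂ be measurable and admit an extension T̃ : {ω ∈ ℂ : Im ω ≥ 0} → ℂ analytic on {Im ω > 0}, with |T̃(ω)| ≤ 1 everywhere and lim_{b→0+} T̃(k+ib) = T(k) for almost all k ∈ ℝ. Then for every a ∈ ℝ, T(P)* E([a,∞)) T(P) ≤ E([a,∞)), where T(P) := F* T(M) F and T(M) is multiplication by T. -/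
open MeasureTheory Complex Filter Set
open scoped ENNReal NNReal

noncomputable section

/-- `L²(ℝ)` with respect to Lebesgue measure. -/
abbrev H2 : Type := Lp ℂ 2 (volume : Measure ℝ)

/-- `𝓕` is the Fourier–Plancherel operator: a unitary on `L²(ℝ)` which is given on
`L¹ ∩ L²` by the usual integral formula `(𝓕φ)(y) = (2π)^{-1/2} ∫ e^{-iyx} φ(x) dx`, and whose
inverse `𝓕* = 𝓕⁻¹` is given on `L¹ ∩ L²` by `(𝓕*φ)(y) = (2π)^{-1/2} ∫ e^{iyx} φ(x) dx`. -/
def IsFourier (𝓕 : H2 ≃ₗᵢ[ℂ] H2) : Prop :=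
  (∀ φ : H2, Integrable (⇑φ) volume →
      (⇑(𝓕 φ) : ℝ → ℂ) =ᵐ[volume]
        fun y : ℝ => (Real.sqrt (2 * Real.pi) : ℂ)⁻¹ *
          ∫ x : ℝ, Complex.exp (-(Complex.I * y * x)) * φ x) ∧
  (∀ φ : H2, Integrable (⇑φ) volume →
      (⇑(𝓕.symm φ) : ℝ → ℂ) =ᵐ[volume]
        fun y : ℝ => (Real.sqrt (2 * Real.pi) : ℂ)⁻¹ *
          ∫ x : ℝ, Complex.exp (Complex.I * y * x) * φ x)

/-- The multiplication operator `g(M)` on `L²`: `φ ↦ g·φ` (pointwise product), defined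
whenever the product is again in `L²`. -/
def mulLp {μ : Measure ℝ} (g : ℝ → ℂ) (φ : Lp ℂ 2 μ) : Lp ℂ 2 μ := by
  classical exact if h : MemLp (fun x => g x * φ x) 2 μ then h.toLp _ else 0

/-- `gt` is an extension of `g : ℝ → ℂ` to the closed upper half-plane which is analytic on the
open upper half-plane, bounded by one there, and has non-tangential boundary values `g` a.e. -/
structure HardyExt (g : ℝ → ℂ) (gt : ℂ → ℂ) : Prop where
  agree : ∀ a : ℝ, gt (a : ℂ) = g a
  analytic : DifferentiableOn ℂ gt {ω : ℂ | 0 < ω.im}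
  bounded : ∀ ω : ℂ, 0 ≤ ω.im → ‖gt ω‖ ≤ 1
  boundary : ∀ᵐ a : ℝ ∂volume,
    Tendsto (fun b : ℝ => gt ((a : ℂ) + b * Complex.I)) (nhdsWithin 0 (Ioi 0)) (nhds (g a))

/-- A positive operator measure (POM) on the Borel sets of `ℝ` with values in the bounded
operators on a Hilbert space `K`: `0 ≤ E(B) ≤ I`, `E(∅) = 0`, and `E` is σ-additive in the
strong operator topology. -/
structure POM (K : Type) [NormedAddCommGroup K] [InnerProductSpace ℂ K] [CompleteSpace K] where
  toFun : Set ℝ → K →L[ℂ] K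
  pos : ∀ B : Set ℝ, (toFun B).IsPositive
  le_one : ∀ B : Set ℝ, (ContinuousLinearMap.id ℂ K - toFun B).IsPositive
  empty : toFun ∅ = 0
  sigma_additive : ∀ f : ℕ → Set ℝ, (∀ n, MeasurableSet (f n)) →
    Pairwise (Function.onFun Disjoint f) →
    ∀ φ : K, HasSum (fun n => toFun (f n) φ) (toFun (⋃ n, f n) φ)

/-- The translation operator `e^{-itP}` on `L²(ℝ)`: `(e^{-itP}ψ)(x) = ψ(x − t)`. -/
def transLp (t : ℝ) (φ : H2) : H2 := by
  classical exact
    if h : MemLp (fun x : ℝ => φ (x - t)) 2 (volume : Measure ℝ) then h.toLp _ else 0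

def qf {H : Type*} [NormedAddCommGroup H] [InnerProductSpace ℂ H] (A : H →L[ℂ] H) (x : H) : ℝ :=
  (inner ℂ x (A x)).re

section VN
variable {H : Type*} [NormedAddCommGroup H] [InnerProductSpace ℂ H] 

lemma qf_smul (A : H →L[ℂ] H) (c : ℂ) (x : H) : qf A (c • x) = ‖c‖^2 * qf A x := by
  unfold qf
  rw [map_smul, inner_smul_left, inner_smul_right, ← mul_assoc, Complex.conj_mul']
  rw [← ofReal_pow, re_ofReal_mul]

lemma qf_cont (A : H →L[ℂ] H) : Continuous (qf A) := by
  unfold qf; fun_prop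

lemma norm_std {N : ℕ} [NeZero N] (k : ZMod N) : ‖ZMod.stdAddChar k‖ = 1 := by
  rw [ZMod.stdAddChar_apply]; exact Circle.norm_coe _

lemma parseval (D : H →L[ℂ] H) (N : ℕ) [NeZero N] (z : ZMod N → H) :
    ∑ k : ZMod N, qf D (∑ l, ZMod.stdAddChar (-(k*l)) • z l) = N * ∑ l, qf D (z l) := by
  unfold qf
  rw [← Complex.re_sum, ← Complex.re_sum, ← Complex.re_ofReal_mul]
  congr 1
  have h1 : ∀ i l m : ZMod N, inner ℂ (ZMod.stdAddChar (-(i * l)) • z l)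
      (D (ZMod.stdAddChar (-(i * m)) • z m)) = ZMod.stdAddChar (i * (l - m)) * inner ℂ (z l) (D (z m)) := by
    intro i l m
    rw [map_smul, inner_smul_left, inner_smul_right, ← mul_assoc]
    congr 1
    rw [← AddChar.map_neg_eq_conj, ← AddChar.map_add_eq_mul]
    congr 1; ring
  simp_rw [map_sum, sum_inner, inner_sum, h1]
  rw [Finset.sum_comm, Finset.mul_sum]
  refine Finset.sum_congr rfl fun l _ => ?_
  rw [Finset.sum_comm]
  simp_rw [← Finset.sum_mul, AddChar.sum_mulShift _ (ZMod.isPrimitive_stdAddChar N)]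
  rw [Finset.sum_eq_single l]
  · simp [ZMod.card]
  · intro b _ hb
    rw [if_neg (sub_ne_zero.2 hb.symm)]; simp
  · simp

lemma vn_cyclic (D : H →L[ℂ] H) (hD : ∀ x, 0 ≤ qf D x) (N : ℕ) [NeZero N] (z : ZMod N → H)
    (m : ℕ) (a : ℕ → ℂ) (M : ℝ)
    (hM : ∀ w : ℂ, ‖w‖ = 1 → ‖∑ j ∈ Finset.range m, a j * w ^ j‖ ≤ M) :
    ∑ l, qf D (∑ j ∈ Finset.range m, a j • z (l + j)) ≤ M ^ 2 * ∑ l, qf D (z l) := by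
  have hN : (0:ℝ) < N := by exact_mod_cast Nat.pos_of_ne_zero (NeZero.ne N)
  have key : ∀ k : ZMod N, ∑ l, ZMod.stdAddChar (-(k*l)) • (∑ j ∈ Finset.range m, a j • z (l + j))
      = (∑ j ∈ Finset.range m, a j * (ZMod.stdAddChar k) ^ j) •
        ∑ l, ZMod.stdAddChar (-(k*l)) • z l := by
    intro k
    rw [Finset.sum_smul]
    simp_rw [Finset.smul_sum]
    rw [Finset.sum_comm]
    refine Finset.sum_congr rfl fun j _ => ?_
    rw [← Equiv.sum_comp (Equiv.addRight (j : ZMod N)) (fun l =>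
      (a j * ZMod.stdAddChar k ^ j) • ZMod.stdAddChar (-(k * l)) • z l)]
    refine Finset.sum_congr rfl fun l _ => ?_
    simp only [Equiv.coe_addRight, smul_smul]
    congr 1
    rw [mul_assoc, mul_comm, ← AddChar.map_nsmul_eq_pow, ← AddChar.map_add_eq_mul]
    congr 2
    rw [nsmul_eq_mul]; ring
  have h1 := parseval D N (fun l => ∑ j ∈ Finset.range m, a j • z (l + j))
  have h2 := parseval D N z
  simp_rw [key, qf_smul] at h1
  have h3 : N * ∑ l, qf D (∑ j ∈ Finset.range m, a j • z (l + j)) ≤ N * (M ^ 2 * ∑ l, qf D (z l)) := by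
    rw [← h1, mul_left_comm, ← h2, Finset.mul_sum]
    refine Finset.sum_le_sum fun k _ => ?_
    refine mul_le_mul_of_nonneg_right ?_ (hD _)
    exact pow_le_pow_left₀ (norm_nonneg _) (hM _ (norm_std k)) 2
  exact le_of_mul_le_mul_left h3 hN

lemma vn_poly [CompleteSpace H] (A : H →L[ℂ] H) (hA : ∀ x, 0 ≤ qf A x) (C : H →L[ℂ] H)
    (ρ : ℝ) (h0 : 0 ≤ ρ) (h1 : ρ < 1)
    (hC : ∀ x, qf A (C x) ≤ ρ * qf A x) (m : ℕ) (a : ℕ → ℂ) (M : ℝ)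
    (hM : ∀ w : ℂ, ‖w‖ = 1 → ‖∑ j ∈ Finset.range m, a j * w ^ j‖ ≤ M) (φ : H) :
    qf A (∑ j ∈ Finset.range m, a j • (C ^ j) φ) ≤ M ^ 2 * qf A φ := by
  set D : H →L[ℂ] H := A - (ContinuousLinearMap.adjoint C) ∘L A ∘L C with hDdef
  have hDq : ∀ x, qf D x = qf A x - qf A (C x) := by
    intro x
    simp [qf, hDdef, ContinuousLinearMap.adjoint_inner_right]
  have hD : ∀ x, 0 ≤ qf D x := by
    intro x; rw [hDq]; nlinarith [hC x, hA x]
  have tele : ∀ (x : H) (n : ℕ), ∑ i ∈ Finset.range n, qf D ((C ^ i) x) = qf A x - qf A ((C ^ n) x) := by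
    intro x n
    simp_rw [hDq]
    have := Finset.sum_range_sub' (fun i => qf A ((C ^ i) x)) n
    simp only [pow_succ', mul_apply_eq_comp, pow_zero, one_apply_eq_self] at this ⊢
    exact this
  have dec : ∀ (x : H) (n : ℕ), qf A ((C ^ n) x) ≤ ρ ^ n * qf A x := by
    intro x n
    induction n with
    | zero => simp
    | succ n ih =>
      rw [pow_succ', mul_apply_eq_comp, pow_succ']
      refine (hC _).trans ?_
      rw [mul_assoc]; gcongr
  set y := ∑ j ∈ Finset.range m, a j • (C ^ j) φ with hy
  have hK : ∀ K : ℕ, (1 - ρ ^ K) * qf A y ≤ M ^ 2 * qf A φ := by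
    intro K
    have hc := vn_cyclic D hD (K + m + 1) (fun l => (C ^ l.val) φ) m a M hM
    have e1 : ∀ F : ZMod (K+m+1) → ℝ, ∑ l, F l = ∑ n ∈ Finset.range (K+m+1), F (n : ZMod (K+m+1)) := by
      intro F
      rw [← Fin.sum_univ_eq_sum_range (fun n => F (n : ZMod (K+m+1)))]
      refine Finset.sum_congr rfl fun l _ => ?_
      congr 1
      exact (ZMod.natCast_zmod_val (n := K+m+1) l).symm
    rw [e1, e1] at hc
    have e2 : ∑ n ∈ Finset.range (K+m+1), qf D ((C ^ (n : ZMod (K+m+1)).val) φ) = 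
       ∑ n ∈ Finset.range (K+m+1), qf D ((C ^ n) φ) := by
      refine Finset.sum_congr rfl fun n hn => ?_
      rw [ZMod.val_cast_of_lt (Finset.mem_range.1 hn)]
    rw [e2, tele] at hc
    have e3 : ∑ n ∈ Finset.range K, qf D ((C ^ n) y) ≤ ∑ n ∈ Finset.range (K+m+1), 
       qf D (∑ j ∈ Finset.range m, a j • (C ^ ((n : ZMod (K+m+1)) + (j : ZMod (K+m+1))).val) φ) := by
      refine le_trans (le_of_eq ?_) (Finset.sum_le_sum_of_subset_of_nonneg (Finset.range_mono (by omega : K ≤ K+m+1)) 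
        (fun _ _ _ => hD _))
      refine Finset.sum_congr rfl fun n hn => ?_
      congr 1
      rw [hy, map_sum]
      refine Finset.sum_congr rfl fun j hj => ?_
      have := Finset.mem_range.1 hn
      have := Finset.mem_range.1 hj
      rw [← Nat.cast_add, ZMod.val_cast_of_lt (by omega), map_smul, pow_add, mul_apply_eq_comp]
    rw [tele] at e3
    have := dec y K
    have := hA ((C ^ (K+m+1)) φ)
    nlinarith [sq_nonneg M]
  have hl : Tendsto (fun K : ℕ => (1 - ρ ^ K) * qf A y) atTop (nhds ((1 - 0) * qf A y)) :=
    ((tendsto_pow_atTop_nhds_zero_of_lt_one h0 h1).const_sub 1).mul_const _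
  simpa using le_of_tendsto' hl hK
end VN

/-- bounded measurable multipliers -/
def BM (g : ℝ → ℂ) (C : ℝ) : Prop := AEStronglyMeasurable g volume ∧ ∀ x, ‖g x‖ ≤ C

lemma BM.memLp {g : ℝ → ℂ} {C : ℝ} (h : BM g C) (φ : H2) :
    MemLp (fun x => g x * φ x) 2 volume :=
  (Lp.memLp φ).of_le_mul (c := C) (h.1.mul (Lp.aestronglyMeasurable φ)) <| by
    filter_upwards with x
    rw [norm_mul]
    exact mul_le_mul_of_nonneg_right (h.2 x) (norm_nonneg _)

lemma BM.coe {g : ℝ → ℂ} {C : ℝ} (h : BM g C) (φ : H2) :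
    ⇑(mulLp g φ) =ᵐ[volume] fun x => g x * φ x := by
  unfold mulLp
  rw [dif_pos (h.memLp φ)]
  exact MemLp.coeFn_toLp _

lemma BM.norm_le {g : ℝ → ℂ} {C : ℝ} (h : BM g C) (φ : H2) :
    ‖mulLp g φ‖ ≤ C * ‖φ‖ := by
  apply Lp.norm_le_mul_norm_of_ae_le_mul
  filter_upwards [h.coe φ] with x hx
  rw [hx, norm_mul]
  exact mul_le_mul_of_nonneg_right (h.2 x) (norm_nonneg _)

lemma BM.add {g : ℝ → ℂ} {C : ℝ} (h : BM g C) (φ ψ : H2) :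
    mulLp g (φ + ψ) = mulLp g φ + mulLp g ψ := by
  apply Lp.ext
  filter_upwards [h.coe φ, h.coe ψ, h.coe (φ + ψ), Lp.coeFn_add φ ψ,
    Lp.coeFn_add (mulLp g φ) (mulLp g ψ)] with x h1 h2 h3 h4 h5
  rw [h3, h5, h4, Pi.add_apply, Pi.add_apply, h1, h2, mul_add]

lemma BM.smul {g : ℝ → ℂ} {C : ℝ} (h : BM g C) (c : ℂ) (φ : H2) :
    mulLp g (c • φ) = c • mulLp g φ := by
  apply Lp.ext
  filter_upwards [h.coe φ, h.coe (c • φ), Lp.coeFn_smul c φ,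
    Lp.coeFn_smul c (mulLp g φ)] with x h1 h3 h4 h5
  rw [h3, h5, h4, Pi.smul_apply, Pi.smul_apply, h1, smul_eq_mul, smul_eq_mul]; ring

def BM.clm {g : ℝ → ℂ} {C : ℝ} (h : BM g C) : H2 →L[ℂ] H2 :=
  LinearMap.mkContinuous
    { toFun := mulLp g
      map_add' := h.add
      map_smul' := h.smul } C h.norm_le

lemma BM.clm_apply {g : ℝ → ℂ} {C : ℝ} (h : BM g C) (φ : H2) : h.clm φ = mulLp g φ := rfl

lemma BM.tendsto {G : ℕ → ℝ → ℂ} {g : ℝ → ℂ} {C : ℝ}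
    (hG : ∀ i, BM (G i) C) (hg : BM g C)
    (hlim : ∀ᵐ x : ℝ, Tendsto (fun i => G i x) atTop (nhds (g x))) (φ : H2) :
    Tendsto (fun i => mulLp (G i) φ) atTop (nhds (mulLp g φ)) := by
  rw [Lp.tendsto_Lp_iff_tendsto_eLpNorm']
  have e : ∀ i, (∫⁻ x, ‖(G i x - g x) * φ x‖ₑ ^ (2:ℝ)) ^ (1/(2:ℝ)) = eLpNorm (⇑(mulLp (G i) φ) - ⇑(mulLp g φ)) 2 volume := by
    intro i
    have hi := hG i
    rw [eLpNorm_eq_lintegral_rpow_enorm_toReal (by norm_num) (by norm_num)]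
    simp only [ENNReal.toReal_ofNat]
    congr 1
    apply lintegral_congr_ae
    filter_upwards [hi.coe φ, hg.coe φ] with x h1 h2
    rw [Pi.sub_apply, h1, h2, sub_mul]
  refine Tendsto.congr e ?_
  have : Tendsto (fun i => ∫⁻ x, ‖(G i x - g x) * φ x‖ₑ ^ (2:ℝ)) atTop (nhds (∫⁻ x : ℝ, 0)) := by
    refine tendsto_lintegral_of_dominated_convergence' (fun x => ‖((2 * C : ℝ):ℂ) * φ x‖ₑ ^ (2:ℝ)) ?_ ?_ ?_ ?_
    · intro i
      have hi := hG i
      exact (((hi.1.sub hg.1).mul (Lp.aestronglyMeasurable φ)).enorm).pow_const _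
    · intro i
      have hi := hG i
      filter_upwards with x
      gcongr
      rw [enorm_le_iff_norm_le, norm_mul, norm_mul]
      gcongr
      have h1 := hi.2 x
      have h2 := hg.2 x
      have h3 := norm_sub_le (G i x) (g x)
      rw [Complex.norm_real, Real.norm_eq_abs]
      exact (by linarith : _ ≤ 2 * C).trans (le_abs_self _)
    · have h := ((Lp.memLp φ).const_mul (((2 * C : ℝ):ℂ))).eLpNorm_lt_top
      have := lintegral_rpow_enorm_lt_top_of_eLpNorm_lt_top (by norm_num) (by norm_num) h
      simpa using this.ne
    · filter_upwards [hlim] with x hx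
      have h1 : Tendsto (fun i => (G i x - g x) * φ x) atTop (nhds ((g x - g x) * φ x)) :=
        (hx.sub_const _).mul_const _
      rw [sub_self, zero_mul] at h1
      have h2 := ((ENNReal.continuous_rpow_const (y := 2)).tendsto _).comp h1.enorm
      simpa [Function.comp_def] using h2
  rw [lintegral_zero] at this
  have h2 := ((ENNReal.continuous_rpow_const (y := 1/2)).tendsto _).comp this
  simpa [Function.comp_def] using h2


lemma mulLp_congr_smul {g₁ g₂ : ℝ → ℂ} {C₁ C₂ : ℝ} (h1 : BM g₁ C₁) (h2 : BM g₂ C₂) (c : ℂ)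
    (φ : H2) (h : ∀ x, g₁ x = c * g₂ x) : mulLp g₁ φ = c • mulLp g₂ φ := by
  apply Lp.ext
  filter_upwards [h1.coe φ, h2.coe φ, Lp.coeFn_smul c (mulLp g₂ φ)] with x e1 e2 e3
  rw [e1, e3, Pi.smul_apply, e2, h, smul_eq_mul, mul_assoc]

lemma mulLp_add_fun {g g₁ g₂ : ℝ → ℂ} {C C₁ C₂ : ℝ} (h0 : BM g C) (h1 : BM g₁ C₁) (h2 : BM g₂ C₂)
    (φ : H2) (h : ∀ x, g x = g₁ x + g₂ x) : mulLp g φ = mulLp g₁ φ + mulLp g₂ φ := by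
  apply Lp.ext
  filter_upwards [h0.coe φ, h1.coe φ, h2.coe φ, Lp.coeFn_add (mulLp g₁ φ) (mulLp g₂ φ)]
    with x e0 e1 e2 e3
  rw [e0, e3, Pi.add_apply, e1, e2, h, add_mul]

lemma mulLp_mulLp {g g₁ g₂ : ℝ → ℂ} {C C₁ C₂ : ℝ} (h0 : BM g C) (h1 : BM g₁ C₁) (h2 : BM g₂ C₂)
    (φ : H2) (h : ∀ x, g x = g₁ x * g₂ x) : mulLp g₁ (mulLp g₂ φ) = mulLp g φ := by
  apply Lp.ext
  filter_upwards [h0.coe φ, h1.coe (mulLp g₂ φ), h2.coe φ] with x e0 e1 e2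
  rw [e0, e1, e2, h, mul_assoc]

lemma mulLp_one {g : ℝ → ℂ} {C : ℝ} (h0 : BM g C) (φ : H2) (h : ∀ x, g x = 1) :
    mulLp g φ = φ := by
  apply Lp.ext
  filter_upwards [h0.coe φ] with x e0
  rw [e0, h, one_mul]

lemma BM.of_cont {g : ℝ → ℂ} {C : ℝ} (h : Continuous g) (hb : ∀ x, ‖g x‖ ≤ C) : BM g C :=
  ⟨h.aestronglyMeasurable, hb⟩

lemma add_I_ne (k : ℝ) : (k : ℂ) + I ≠ 0 := by
  intro h; have := congrArg Complex.im h; simp at this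

lemma norm_add_I (k : ℝ) : ‖(k : ℂ) + I‖ ^ 2 = k ^ 2 + 1 := by
  rw [Complex.sq_norm, normSq_apply]; simp; ring

lemma norm_add_I_ge (k : ℝ) : |k| ≤ ‖(k : ℂ) + I‖ := by
  refine abs_le_of_sq_le_sq ?_ (norm_nonneg _)
  rw [norm_add_I]; linarith

lemma norm_add_I_ge_one (k : ℝ) : 1 ≤ ‖(k : ℂ) + I‖ := by
  have := norm_add_I k
  nlinarith [norm_nonneg ((k : ℂ) + I), sq_nonneg k]

def cay (k : ℝ) : ℂ := (k - I) / (k + I)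

lemma cay_cont : Continuous cay := by
  unfold cay
  exact Continuous.div (by fun_prop) (by fun_prop) add_I_ne

lemma norm_cay (k : ℝ) : ‖cay k‖ = 1 := by
  unfold cay
  have h : (k : ℂ) - I = (starRingEnd ℂ) (k + I) := by simp [sub_eq_add_neg]
  rw [h, norm_div, Complex.norm_conj, div_self]
  exact norm_ne_zero_iff.2 (add_I_ne k)

lemma cay_bm : BM cay 1 := BM.of_cont cay_cont fun k => (norm_cay k).le

lemma e_bm (t : ℝ) : BM (fun k : ℝ => Complex.exp (Complex.I * t * k)) 1 := by
  refine BM.of_cont (by fun_prop) fun k => ?_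
  rw [show Complex.I * t * k = ((t * k : ℝ) : ℂ) * I by push_cast; ring, norm_exp_ofReal_mul_I]

lemma qf_add (A : H2 →L[ℂ] H2) (hA : A.IsPositive) (x y : H2) :
    qf A (x + y) = qf A x + qf A y + 2 * (inner ℂ x (A y)).re := by
  have h1 : (inner ℂ y (A x)).re = (inner ℂ x (A y)).re := by
    rw [← inner_conj_symm, conj_re]
    congr 1
    exact hA.isSelfAdjoint.isSymmetric x y
  unfold qf
  simp only [map_add, inner_add_left, inner_add_right, add_re, h1]
  ring

lemma cay_contr (A : H2 →L[ℂ] H2) (hA : A.IsPositive)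
    (hV : ∀ t : ℝ, 0 ≤ t → ∀ φ : H2,
      qf A (mulLp (fun k : ℝ => Complex.exp (Complex.I * t * k)) φ) ≤ qf A φ) (φ : H2) :
    qf A (mulLp cay φ) ≤ qf A φ := by
  have hq : ∀ x, 0 ≤ qf A x := fun x => hA.re_inner_nonneg_right x
  have hp : BM (fun k : ℝ => 1 / ((k : ℂ) + I)) 1 := by
    refine BM.of_cont (Continuous.div (by fun_prop) (by fun_prop) add_I_ne) fun k => ?_
    rw [norm_div, norm_one]
    exact div_le_one_of_le₀ (norm_add_I_ge_one k) (norm_nonneg _)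
  have hu : BM (fun k : ℝ => (k : ℂ) / ((k : ℂ) + I)) 1 := by
    refine BM.of_cont (Continuous.div (by fun_prop) (by fun_prop) add_I_ne) fun k => ?_
    rw [norm_div, Complex.norm_real]
    exact div_le_one_of_le₀ (norm_add_I_ge k) (norm_nonneg _)
  have hIp : BM (fun k : ℝ => I * (1 / ((k : ℂ) + I))) 1 :=
    ⟨hp.1.const_mul I, fun k => by rw [norm_mul, norm_I, one_mul]; exact hp.2 k⟩
  have hIpn : BM (fun k : ℝ => (-I) * (1 / ((k : ℂ) + I))) 1 :=
    ⟨hp.1.const_mul (-I), fun k => by rw [norm_mul, norm_neg, norm_I, one_mul]; exact hp.2 k⟩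
  have hIu : BM (fun k : ℝ => I * ((k : ℂ) / ((k : ℂ) + I))) 1 :=
    ⟨hu.1.const_mul I, fun k => by rw [norm_mul, norm_I, one_mul]; exact hu.2 k⟩
  have h1 : BM (fun _ : ℝ => (1 : ℂ)) 1 := BM.of_cont continuous_const fun k => by simp
  set ψ := mulLp (fun k : ℝ => 1 / ((k : ℂ) + I)) φ with hψ
  set u := mulLp (fun k : ℝ => (k : ℂ) / ((k : ℂ) + I)) φ with hudef
  have e1 : φ = u + I • ψ := by
    rw [← mulLp_congr_smul hIp hp I φ (fun _ => rfl), hudef,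
      ← mulLp_add_fun h1 hu hIp φ, mulLp_one h1 φ (fun _ => rfl)]
    intro k
    have := add_I_ne k
    field_simp
  have e2 : mulLp cay φ = u + (-I) • ψ := by
    rw [← mulLp_congr_smul hIpn hp (-I) φ (fun _ => rfl), hudef,
      ← mulLp_add_fun cay_bm hu hIpn φ]
    intro k
    have := add_I_ne k
    unfold cay
    field_simp
    ring
  set G : ℕ → ℝ → ℂ := fun n k =>
    (Complex.exp (I * (1 / ((n : ℝ) + 1) : ℝ) * k) - 1) / ((1 / ((n : ℝ) + 1) : ℝ) * (k + I)) with hG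
  have hGb : ∀ n, BM (G n) 1 := by
    intro n
    have ht : (0 : ℝ) < 1 / ((n : ℝ) + 1) := by positivity
    refine BM.of_cont (Continuous.div (by fun_prop) (by fun_prop) ?_) fun k => ?_
    · intro k
      exact mul_ne_zero (by exact_mod_cast ht.ne') (add_I_ne k)
    · simp only [hG]
      set t := 1 / ((n : ℝ) + 1)
      rw [norm_div, norm_mul, Complex.norm_real, Real.norm_of_nonneg ht.le]
      refine div_le_one_of_le₀ ?_ (by positivity)
      have := Real.norm_exp_I_mul_ofReal_sub_one_le (x := t * k)
      rw [show I * t * k = I * ((t * k : ℝ) : ℂ) by push_cast; ring]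
      refine this.trans ?_
      rw [norm_mul, Real.norm_of_nonneg ht.le]
      gcongr
      exact norm_add_I_ge k
  have hlim := BM.tendsto hGb hIu (by
    filter_upwards with k
    have hd : HasDerivAt (fun t : ℝ => Complex.exp (I * t * k)) (I * k) 0 := by
      have h := (((hasDerivAt_id (0 : ℝ)).ofReal_comp.const_mul I).mul_const (k : ℂ)).cexp
      simpa using h
    have h := hd.tendsto_slope_zero_right
    have h2 : Tendsto (fun n : ℕ => 1 / ((n : ℝ) + 1)) atTop (nhdsWithin 0 (Ioi 0)) := by
      refine tendsto_nhdsWithin_iff.2 ⟨tendsto_one_div_add_atTop_nhds_zero_nat, ?_⟩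
      filter_upwards with n
      exact mem_Ioi.2 (by positivity)
    have h3 := (h.comp h2).mul_const (((k : ℂ) + I)⁻¹)
    rw [← mul_div_assoc, div_eq_mul_inv]
    refine h3.congr fun n => ?_
    simp only [hG, Function.comp_apply, zero_add, ofReal_zero, mul_zero, zero_mul, Complex.exp_zero,
      Complex.real_smul, ofReal_inv]
    rw [div_eq_mul_inv _ (_ * ((k : ℂ) + I)), mul_inv]
    ring) φ
  rw [mulLp_congr_smul hIu hu I φ (fun _ => rfl)] at hlim
  have hneg : ∀ n, (inner ℂ ψ (A (mulLp (G n) φ))).re ≤ 0 := by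
    intro n
    have ht : (0 : ℝ) < 1 / ((n : ℝ) + 1) := by positivity
    have hv := hV _ ht.le ψ
    have htG : BM (fun k => ((1 / ((n : ℝ) + 1) : ℝ) : ℂ) * G n k) (1 / ((n : ℝ) + 1)) :=
      ⟨(hGb n).1.const_mul _, fun k => by
        rw [norm_mul, Complex.norm_real, Real.norm_of_nonneg ht.le]
        exact mul_le_of_le_one_right ht.le ((hGb n).2 k)⟩
    have hprod : BM (fun k : ℝ => Complex.exp (I * (1 / ((n : ℝ) + 1) : ℝ) * k) * (1 / ((k : ℂ) + I))) 1 :=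
      ⟨(e_bm _).1.mul hp.1, fun k => by
        rw [norm_mul]; exact mul_le_one₀ ((e_bm _).2 k) (norm_nonneg _) (hp.2 k)⟩
    have e3 : mulLp (fun k : ℝ => Complex.exp (I * (1 / ((n : ℝ) + 1) : ℝ) * k)) ψ
        = ψ + (((1 / ((n : ℝ) + 1) : ℝ)) : ℂ) • mulLp (G n) φ := by
      rw [hψ, mulLp_mulLp hprod (e_bm _) hp φ (fun _ => rfl),
        ← mulLp_congr_smul htG (hGb n) _ φ (fun _ => rfl), ← mulLp_add_fun hprod hp htG φ]
      intro k
      have h5 := add_I_ne k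
      have h6 : (((1 / ((n : ℝ) + 1) : ℝ)) : ℂ) ≠ 0 := by exact_mod_cast ht.ne'
      simp only [hG]
      field_simp
      ring
    rw [e3, qf_add A hA, qf_smul, map_smul, inner_smul_right, re_ofReal_mul] at hv
    have := hq (mulLp (G n) φ)
    by_contra hc
    push Not at hc
    have := mul_pos ht hc
    nlinarith [mul_nonneg (sq_nonneg ‖(((1 / ((n : ℝ) + 1) : ℝ)) : ℂ)‖) (hq (mulLp (G n) φ))]
  have hfin : (inner ℂ ψ (A (I • u))).re ≤ 0 := by
    have hc : Continuous fun w : H2 => (inner ℂ ψ (A w)).re := by fun_prop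
    exact le_of_tendsto' ((hc.tendsto _).comp hlim) hneg
  have hs : (inner ℂ ψ (A u)) = (starRingEnd ℂ) (inner ℂ u (A ψ)) := by
    rw [inner_conj_symm]
    exact (hA.isSelfAdjoint.isSymmetric ψ u).symm
  rw [map_smul, inner_smul_right, hs] at hfin
  rw [e2]
  conv_rhs => rw [e1]
  rw [qf_add A hA, qf_add A hA, qf_smul, qf_smul, map_smul, map_smul, inner_smul_right,
    inner_smul_right, norm_neg]
  generalize inner ℂ u (A ψ) = w at hfin ⊢
  simp at hfin ⊢
  linarith

lemma poly_mul {w : ℝ → ℂ} {ρ : ℝ} (hw : BM w ρ) (a : ℕ → ℂ) (φ : H2) (m : ℕ) :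
    (∃ K, BM (fun k => ∑ j ∈ Finset.range m, a j * w k ^ j) K) ∧
    mulLp (fun k => ∑ j ∈ Finset.range m, a j * w k ^ j) φ
      = ∑ j ∈ Finset.range m, a j • (hw.clm ^ j) φ := by
  have hpow : ∀ j : ℕ, BM (fun k => w k ^ j) (ρ ^ j) ∧ mulLp (fun k => w k ^ j) φ = (hw.clm ^ j) φ := by
    intro j
    have hb : ∀ j : ℕ, BM (fun k => w k ^ j) (ρ ^ j) := fun j => ⟨hw.1.pow j, fun k => by
      rw [norm_pow]; exact pow_le_pow_left₀ (norm_nonneg _) (hw.2 k) j⟩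
    refine ⟨hb j, ?_⟩
    induction j with
    | zero => simpa using mulLp_one (hb 0) φ (fun k => pow_zero _)
    | succ j ih =>
      rw [pow_succ' hw.clm, mul_apply_eq_comp, ← ih, BM.clm_apply]
      exact (mulLp_mulLp (hb (j+1)) hw (hb j) φ (fun k => pow_succ' _ _)).symm
  have ha : ∀ j, BM (fun k => a j * w k ^ j) (‖a j‖ * ρ ^ j) := fun j =>
    ⟨(hpow j).1.1.const_mul _, fun k => by
      rw [norm_mul]; exact mul_le_mul_of_nonneg_left ((hpow j).1.2 k) (norm_nonneg _)⟩
  induction m with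
  | zero =>
    have h0 : BM (fun _ : ℝ => (0 : ℂ)) 0 := BM.of_cont continuous_const fun k => by simp
    refine ⟨⟨0, by simpa using h0⟩, ?_⟩
    simp only [Finset.range_zero, Finset.sum_empty]
    have := mulLp_congr_smul h0 h0 0 φ (fun k => by simp)
    simpa using this
  | succ m ih =>
    obtain ⟨⟨K, hK⟩, e⟩ := ih
    have hB : BM (fun k => ∑ j ∈ Finset.range (m+1), a j * w k ^ j) (K + ‖a m‖ * ρ ^ m) := by
      simp only [Finset.sum_range_succ]
      exact ⟨hK.1.add (ha m).1, fun k => (norm_add_le _ _).trans (add_le_add (hK.2 k) ((ha m).2 k))⟩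
    refine ⟨⟨_, hB⟩, ?_⟩
    rw [Finset.sum_range_succ, ← e, ← (hpow m).2,
      ← mulLp_congr_smul (ha m) (hpow m).1 (a m) φ (fun _ => rfl)]
    exact mulLp_add_fun hB hK (ha m) φ (fun k => Finset.sum_range_succ _ _)

lemma vn_hol (A : H2 →L[ℂ] H2) (hA : A.IsPositive)
    (hC : ∀ φ : H2, qf A (mulLp cay φ) ≤ qf A φ) (g : ℂ → ℂ) (R : ℝ≥0) (hR : 1 < R)
    (hg : DifferentiableOn ℂ g (Metric.closedBall 0 R)) (hg1 : ∀ z, ‖z‖ ≤ 1 → ‖g z‖ ≤ 1)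
    (ρ : ℝ) (h0 : 0 ≤ ρ) (h1 : ρ < 1) :
    BM (fun k => g (ρ * cay k)) 1 ∧
    ∀ φ : H2, qf A (mulLp (fun k => g (ρ * cay k)) φ) ≤ qf A φ := by
  have hq : ∀ x, 0 ≤ qf A x := fun x => hA.re_inner_nonneg_right x
  have hn : ∀ k, ‖(ρ : ℂ) * cay k‖ = ρ := fun k => by
    rw [norm_mul, norm_cay, mul_one, Complex.norm_real, Real.norm_of_nonneg h0]
  have hgb : BM (fun k => g (ρ * cay k)) 1 := by
    refine BM.of_cont ?_ fun k => hg1 _ ((hn k).le.trans h1.le)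
    refine hg.continuousOn.comp_continuous (continuous_const.mul cay_cont) fun k => ?_
    rw [mem_closedBall_zero_iff, hn]
    have : (1 : ℝ) < R := by exact_mod_cast hR
    linarith
  refine ⟨hgb, fun φ => ?_⟩
  have hw : BM (fun k => (ρ : ℂ) * cay k) ρ :=
    BM.of_cont (continuous_const.mul cay_cont) fun k => (hn k).le
  have hCq : ∀ x, qf A (hw.clm x) ≤ ρ * qf A x := by
    intro x
    rw [BM.clm_apply, mulLp_congr_smul hw cay_bm (ρ : ℂ) x (fun _ => rfl), qf_smul,
      Complex.norm_real, Real.norm_of_nonneg h0]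
    refine mul_le_mul ?_ (hC x) (hq _) h0
    nlinarith
  have hps := DifferentiableOn.hasFPowerSeriesOnBall hg (by positivity)
  obtain ⟨R', hR1, hR2⟩ := exists_between hR
  have hunif := hps.tendstoUniformlyOn (r' := R') (by exact_mod_cast hR2)
  set p := cauchyPowerSeries g 0 R with hp
  have hsum : ∀ n z, p.partialSum n z = ∑ j ∈ Finset.range n, p.coeff j * z ^ j := by
    intro n z
    unfold FormalMultilinearSeries.partialSum
    refine Finset.sum_congr rfl fun j _ => ?_
    rw [FormalMultilinearSeries.apply_eq_pow_smul_coeff, smul_eq_mul, mul_comm]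
  have hR1' : (1 : ℝ) < R' := by exact_mod_cast hR1
  have hball : ∀ z : ℂ, ‖z‖ ≤ 1 → z ∈ Metric.ball (0 : ℂ) R' := fun z hz => by
    rw [mem_ball_zero_iff]; linarith
  have main : ∀ ε : ℝ, 0 < ε → qf A (mulLp (fun k => g (ρ * cay k)) φ) ≤ (1 + ε) ^ 2 * qf A φ := by
    intro ε hε
    obtain ⟨N, hN⟩ := eventually_atTop.1 (Metric.tendstoUniformlyOn_iff.1 hunif ε hε)
    have hbd : ∀ n z, ‖z‖ ≤ 1 → ‖∑ j ∈ Finset.range (n + N), p.coeff j * z ^ j‖ ≤ 1 + ε := by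
      intro n z hz
      have h2 := hN (n + N) (by omega) z (hball z hz)
      rw [hsum, zero_add, dist_eq_norm, norm_sub_rev] at h2
      have h3 := hg1 z hz
      have h4 := norm_sub_norm_le (∑ j ∈ Finset.range (n + N), p.coeff j * z ^ j) (g z)
      linarith
    have hgb' : BM (fun k => g (ρ * cay k)) (1 + ε) := ⟨hgb.1, fun k => (hgb.2 k).trans (by linarith)⟩
    have hGb : ∀ n, BM (fun k => ∑ j ∈ Finset.range (n + N), p.coeff j * (ρ * cay k) ^ j) (1 + ε) := by
      intro n
      obtain ⟨⟨K, hK⟩, -⟩ := poly_mul hw p.coeff φ (n + N)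
      exact ⟨hK.1, fun k => hbd n _ ((hn k).le.trans h1.le)⟩
    have hl := BM.tendsto hGb hgb' (by
      filter_upwards with k
      have h2 := hunif.tendsto_at (hball _ ((hn k).le.trans h1.le))
      rw [zero_add] at h2
      simp only [hsum] at h2
      exact h2.comp (tendsto_add_atTop_nat N)) φ
    refine le_of_tendsto' (((qf_cont A).tendsto _).comp hl) fun n => ?_
    rw [Function.comp_apply, (poly_mul hw p.coeff φ (n + N)).2]
    exact vn_poly A hq hw.clm ρ h0 h1 hCq (n + N) p.coeff (1 + ε) (fun w hw => hbd n w hw.le) φ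
  have hl : Tendsto (fun n : ℕ => (1 + 1 / ((n : ℝ) + 1)) ^ 2 * qf A φ) atTop
      (nhds ((1 + 0) ^ 2 * qf A φ)) :=
    ((tendsto_one_div_add_atTop_nhds_zero_nat.const_add 1).pow 2).mul_const _
  have := ge_of_tendsto' hl fun n => main _ (by positivity)
  simpa using this

lemma im_cayinv (z : ℂ) (hz : ‖z‖ ≤ 1) : 0 ≤ (I * (1 + z) / (1 - z)).im := by
  have h1 : (I * (1 + z) / (1 - z)).im = (1 - ‖z‖ ^ 2) / normSq (1 - z) := by
    rw [Complex.sq_norm, div_im, normSq_apply z]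
    simp
    ring
  rw [h1]
  refine div_nonneg ?_ (normSq_nonneg _)
  nlinarith [norm_nonneg z]

lemma cay_ne_one (k : ℝ) : 1 - cay k ≠ 0 := by
  unfold cay
  have := add_I_ne k
  rw [one_sub_div this, div_ne_zero_iff]
  refine ⟨?_, this⟩
  ring_nf
  simp

lemma cayinv_cay (k : ℝ) : I * (1 + cay k) / (1 - cay k) = k := by
  have h1 := cay_ne_one k
  have h2 := add_I_ne k
  rw [div_eq_iff h1]
  unfold cay
  field_simp
  ring_nf

lemma core (A : H2 →L[ℂ] H2) (hA : A.IsPositive)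
    (hV : ∀ t : ℝ, 0 ≤ t → ∀ φ : H2,
      qf A (mulLp (fun k : ℝ => Complex.exp (Complex.I * t * k)) φ) ≤ qf A φ)
    (T : ℝ → ℂ) (hT : Measurable T) (Tt : ℂ → ℂ) (hTt : HardyExt T Tt) (φ : H2) :
    qf A (mulLp T φ) ≤ qf A φ := by
  have hC := cay_contr A hA hV
  have hTb : BM T 1 := ⟨hT.aestronglyMeasurable, fun k => by
    rw [← hTt.agree]; exact hTt.bounded _ (by simp)⟩
  have hdiff : ∀ z : ℂ, 0 < z.im → DifferentiableAt ℂ Tt z := fun z hz =>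
    hTt.analytic.differentiableAt ((isOpen_lt continuous_const Complex.continuous_im).mem_nhds hz)
  have step : ∀ b : ℝ, 0 < b → BM (fun k : ℝ => Tt (k + b * I)) 1 ∧
      qf A (mulLp (fun k : ℝ => Tt (k + b * I)) φ) ≤ qf A φ := by
    intro b hb
    have hbm : BM (fun k : ℝ => Tt (k + b * I)) 1 := by
      refine BM.of_cont (continuous_iff_continuousAt.2 fun k => ?_) fun k =>
        hTt.bounded _ (by simpa using hb.le)
      exact ContinuousAt.comp (f := fun k : ℝ => (k : ℂ) + b * I) (g := Tt)
        (hdiff _ (by simpa using hb)).continuousAt (by fun_prop)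
    refine ⟨hbm, ?_⟩
    set f : ℂ → ℂ := fun z => Tt (I * (1 + z) / (1 - z) + b * I) with hf
    have hfim : ∀ z : ℂ, ‖z‖ ≤ 1 → 0 < (I * (1 + z) / (1 - z) + b * I).im := fun z hz => by
      have := im_cayinv z hz
      simp only [add_im, mul_im, ofReal_re, I_im, ofReal_im, I_re, mul_one, mul_zero, add_zero] at this ⊢
      linarith
    have hfd : ∀ z : ℂ, ‖z‖ ≤ 1 → 1 - z ≠ 0 → DifferentiableAt ℂ f z := fun z hz hz1 => by
      refine DifferentiableAt.comp (g := Tt) (f := fun z => I * (1 + z) / (1 - z) + b * I) z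
        (hdiff _ (hfim z hz)) ?_
      exact (DifferentiableAt.div (by fun_prop) (by fun_prop) hz1).add_const _
    set s : ℕ → ℝ := fun n => 1 - 1 / ((n : ℝ) + 1) with hs
    have hs0 : ∀ n, 0 ≤ s n := fun n => by
      simp only [hs, sub_nonneg]
      exact div_le_one_of_le₀ (by linarith [(Nat.cast_nonneg n : (0:ℝ) ≤ n)]) (by positivity)
    have hs1 : ∀ n, s n < 1 := fun n => by
      have : (0:ℝ) < 1 / ((n : ℝ) + 1) := by positivity
      simp only [hs]; linarith
    have hst : Tendsto s atTop (nhds 1) := by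
      simpa [hs] using (tendsto_one_div_add_atTop_nhds_zero_nat (𝕜 := ℝ)).const_sub (1:ℝ)
    have hv : ∀ n, BM (fun k => f (s n * (s n * cay k))) 1 ∧
        ∀ φ : H2, qf A (mulLp (fun k => f (s n * (s n * cay k))) φ) ≤ qf A φ := by
      intro n
      have h0 := hs0 n
      have h1 := hs1 n
      have hRpos : 0 ≤ 2 / (1 + s n) := by positivity
      have hle : ∀ z : ℂ, ‖z‖ ≤ 2 / (1 + s n) → ‖(s n : ℂ) * z‖ < 1 := by
        intro z hz
        rw [norm_mul, Complex.norm_real, Real.norm_of_nonneg h0]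
        refine (mul_le_mul_of_nonneg_left hz h0).trans_lt ?_
        rw [← mul_div_assoc, div_lt_one (by linarith)]
        linarith
      have h12 : 1 < 2 / (1 + s n) := by rw [lt_div_iff₀ (by linarith)]; linarith
      refine vn_hol A hA hC (fun z => f (s n * z)) ⟨2 / (1 + s n), hRpos⟩ ?_ ?_ ?_ (s n) h0 h1
      · exact_mod_cast h12
      · intro z hz
        have hz' := hle z (mem_closedBall_zero_iff.1 hz)
        refine DifferentiableAt.differentiableWithinAt ?_
        refine DifferentiableAt.comp (g := f) (f := fun z => (s n : ℂ) * z) z (hfd _ hz'.le ?_) (by fun_prop)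
        intro h
        rw [← sub_eq_zero.1 h, norm_one] at hz'
        exact lt_irrefl _ hz'
      · intro z hz
        exact hTt.bounded _ (hfim _ (hle z (hz.trans h12.le)).le).le
    have hl := BM.tendsto (fun n => (hv n).1) hbm (by
      filter_upwards with k
      have h1 : Tendsto (fun n => (s n : ℂ) * (s n * cay k)) atTop (nhds (cay k)) := by
        have h2 := (continuous_ofReal.tendsto _).comp hst
        simpa using h2.mul (h2.mul_const (cay k))
      have h3 := ((hfd (cay k) (norm_cay k).le (cay_ne_one k)).continuousAt.tendsto).comp h1
      have h4 : f (cay k) = Tt (k + b * I) := by simp only [hf, cayinv_cay]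
      rw [h4] at h3
      exact h3) φ
    exact le_of_tendsto' (((qf_cont A).tendsto _).comp hl) fun n => (hv n).2 φ
  have h2 : Tendsto (fun n : ℕ => 1 / ((n : ℝ) + 1)) atTop (nhdsWithin 0 (Ioi 0)) := by
    refine tendsto_nhdsWithin_iff.2 ⟨tendsto_one_div_add_atTop_nhds_zero_nat, ?_⟩
    filter_upwards with n
    exact mem_Ioi.2 (by positivity)
  have hl := BM.tendsto (G := fun (n : ℕ) (k : ℝ) => Tt (k + (1 / ((n : ℝ) + 1) : ℝ) * I))
    (fun n => (step _ (by positivity)).1) hTb (by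
      filter_upwards [hTt.boundary] with k hk
      exact hk.comp h2) φ
  exact le_of_tendsto' (((qf_cont A).tendsto _).comp hl) fun n => (step _ (by positivity)).2

lemma mp_sub (t : ℝ) : MeasurePreserving (fun x : ℝ => x - t) volume volume :=
  measurePreserving_sub_right volume t

lemma transLp_eq (t : ℝ) (φ : H2) :
    transLp t φ = Lp.compMeasurePreserving (fun x : ℝ => x - t) (mp_sub t) φ := by
  have h : MemLp (fun x : ℝ => φ (x - t)) 2 (volume : Measure ℝ) :=
    (Lp.memLp φ).comp_measurePreserving (mp_sub t)
  unfold transLp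
  rw [dif_pos h]
  apply Lp.ext
  filter_upwards [h.coeFn_toLp, Lp.coeFn_compMeasurePreserving φ (mp_sub t)] with x h1 h2
  rw [h1, h2]; rfl

lemma transLp_coe (t : ℝ) (φ : H2) : ⇑(transLp t φ) =ᵐ[volume] fun x => φ (x - t) := by
  rw [transLp_eq]
  exact Lp.coeFn_compMeasurePreserving φ (mp_sub t)

lemma transLp_cont (t : ℝ) : Continuous (transLp t) := by
  have : transLp t = ⇑(Lp.compMeasurePreservingₗᵢ ℂ (E := ℂ) (p := 2) (fun x : ℝ => x - t) (mp_sub t)) := by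
    funext φ; exact transLp_eq t φ
  rw [this]
  exact LinearIsometry.continuous _

lemma transLp_adj (t : ℝ) (x y : H2) :
    (inner ℂ (transLp (-t) x) y : ℂ) = inner ℂ x (transLp t y) := by
  rw [L2.inner_def, L2.inner_def]
  rw [← integral_sub_right_eq_self _ t]
  have h1 := (mp_sub t).quasiMeasurePreserving.ae (transLp_coe (-t) x)
  refine integral_congr_ae ?_
  filter_upwards [h1, transLp_coe t y] with s e1 e2
  rw [e1, e2]
  simp

lemma fourier_trans (𝓕 : H2 ≃ₗᵢ[ℂ] H2) (h𝓕 : IsFourier 𝓕) (t : ℝ) (φ : H2) :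
    𝓕 (transLp (-t) φ) = mulLp (fun k : ℝ => Complex.exp (Complex.I * t * k)) (𝓕 φ) := by
  have hd : DenseRange ((↑) : Lp.simpleFunc ℂ 2 (volume : Measure ℝ) → H2) :=
    Lp.simpleFunc.denseRange (by norm_num)
  refine hd.induction_on (p := fun φ => 𝓕 (transLp (-t) φ)
    = mulLp (fun k : ℝ => Complex.exp (Complex.I * t * k)) (𝓕 φ)) φ ?_ ?_
  · refine isClosed_eq (𝓕.continuous.comp (transLp_cont _)) ?_
    exact (e_bm t).clm.continuous.comp 𝓕.continuous
  · intro s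
    have hint : Integrable (⇑(s : H2)) volume := by
      have h1 : MemLp (Lp.simpleFunc.toSimpleFunc s) 2 (volume : Measure ℝ) := Lp.simpleFunc.memLp s
      have h2 := (SimpleFunc.memLp_iff_integrable (by norm_num) (by norm_num)).1 h1
      exact h2.congr (Lp.simpleFunc.toSimpleFunc_eq_toFun s)
    set φ : H2 := (s : H2)
    have hint2 : Integrable (⇑(transLp (-t) φ)) volume :=
      (hint.comp_sub_right (-t)).congr (transLp_coe (-t) φ).symm
    apply Lp.ext
    filter_upwards [h𝓕.1 φ hint, h𝓕.1 _ hint2, (e_bm t).coe (𝓕 φ)] with y e1 e2 e3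
    rw [e2, e3, e1, mul_left_comm]
    congr 1
    rw [← integral_const_mul]
    rw [← integral_add_right_eq_self (fun x : ℝ => Complex.exp (I * t * y) * (Complex.exp (-(I * y * x)) * φ x)) t]
    refine integral_congr_ae ?_
    filter_upwards [transLp_coe (-t) φ] with x hx
    rw [hx, ← mul_assoc, ← Complex.exp_add, sub_neg_eq_add]
    congr 2
    push_cast; ring

lemma POM.mono_Ici (E : POM H2) (a t : ℝ) (ht : 0 ≤ t) (φ : H2) :
    (inner ℂ φ (E.toFun (Ici (a + t)) φ) : ℂ).re ≤ (inner ℂ φ (E.toFun (Ici a) φ) : ℂ).re := by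
  set f : ℕ → Set ℝ := fun n => if n = 0 then Ici (a + t) else if n = 1 then Ico a (a + t) else ∅ with hf
  have hm : ∀ n, MeasurableSet (f n) := by
    intro n; simp only [hf]; split_ifs
    · exact measurableSet_Ici
    · exact measurableSet_Ico
    · exact MeasurableSet.empty
  have hdis : Pairwise (Function.onFun Disjoint f) := by
    intro i j hij
    simp only [Function.onFun, hf]
    rw [Set.disjoint_left]
    intro x hx hy
    split_ifs at hx hy <;> simp_all <;> linarith
  have hU : ⋃ n, f n = Ici a := by
    ext x
    simp only [mem_iUnion, mem_Ici]
    constructor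
    · rintro ⟨n, hn⟩
      simp only [hf] at hn
      split_ifs at hn <;> simp_all <;> linarith
    · intro hx
      by_cases h : a + t ≤ x
      · exact ⟨0, by simpa [hf] using h⟩
      · exact ⟨1, by simp [hf]; exact ⟨hx, not_le.1 h⟩⟩
  have h1 := E.sigma_additive f hm hdis φ
  rw [hU] at h1
  have h2 : HasSum (fun n => E.toFun (f n) φ) (∑ n ∈ Finset.range 2, E.toFun (f n) φ) := by
    apply hasSum_sum_of_ne_finset_zero
    intro n hn
    have : f n = ∅ := by
      simp only [Finset.mem_range, not_lt] at hn
      simp only [hf]; rw [if_neg (by omega), if_neg (by omega)]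
    rw [this, E.empty]; rfl
  rw [h1.unique h2, Finset.sum_range_succ, Finset.sum_range_one, inner_add_right, add_re]
  have h3 : f 0 = Ici (a + t) := by simp [hf]
  have h4 : 0 ≤ (inner ℂ φ (E.toFun (f 1) φ) : ℂ).re := (E.pos (f 1)).re_inner_nonneg_right φ
  rw [h3]; linarith

/-- Let `E` be a localization observable on `L²(ℝ)`: a POM which is
translation covariant, `e^{-itP} E(B) e^{itP} = E(B+t)`, and boost invariant,
`e^{itQ} E(B) e^{-itQ} = E(B)`. If `T : ℝ → ℂ` is measurable with a bounded analytic
extension to the upper half-plane with boundary values `T` a.e., then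
`T(P)* E([a,∞)) T(P) ≤ E([a,∞))` for every `a ∈ ℝ`, where `T(P) = F* T(M) F`. -/
theorem statement8 (𝓕 : H2 ≃ₗᵢ[ℂ] H2) (h𝓕 : IsFourier 𝓕) (E : POM H2)
    (hcov : ∀ (t : ℝ) (B : Set ℝ), MeasurableSet B → ∀ φ : H2,
      transLp t (E.toFun B (transLp (-t) φ)) = E.toFun ((· + t) '' B) φ)
    (hboost : ∀ (t : ℝ) (B : Set ℝ), MeasurableSet B → ∀ φ : H2,
      mulLp (fun x : ℝ => Complex.exp (Complex.I * t * x))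
        (E.toFun B (mulLp (fun x : ℝ => Complex.exp (-(Complex.I * t * x))) φ)) =
      E.toFun B φ)
    (T : ℝ → ℂ) (hT : Measurable T) (Tt : ℂ → ℂ) (hTt : HardyExt T Tt)
    (a : ℝ) (φ : H2) :
    (inner ℂ (𝓕.symm (mulLp T (𝓕 φ)))
        (E.toFun (Set.Ici a) (𝓕.symm (mulLp T (𝓕 φ)))) : ℂ).re ≤
      (inner ℂ φ (E.toFun (Set.Ici a) φ) : ℂ).re := by
  set A : H2 →L[ℂ] H2 := E.toFun (Set.Ici a) with hAdef
  set U : H2 →L[ℂ] H2 := (𝓕.symm.toContinuousLinearEquiv : H2 →L[ℂ] H2) with hU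
  set B : H2 →L[ℂ] H2 := (ContinuousLinearMap.adjoint U) ∘L A ∘L U with hB
  have hqB : ∀ x, qf B x = (inner ℂ (𝓕.symm x) (A (𝓕.symm x)) : ℂ).re := by
    intro x
    simp only [qf, hB, ContinuousLinearMap.comp_apply, ContinuousLinearMap.adjoint_inner_right]
    rfl
  have hBpos : B.IsPositive := (E.pos (Set.Ici a)).adjoint_conj U
  have hV : ∀ t : ℝ, 0 ≤ t → ∀ φ : H2,
      qf B (mulLp (fun k : ℝ => Complex.exp (Complex.I * t * k)) φ) ≤ qf B φ := by
    intro t ht x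
    have h1 : mulLp (fun k : ℝ => Complex.exp (Complex.I * t * k)) x
        = 𝓕 (transLp (-t) (𝓕.symm x)) := by
      rw [fourier_trans 𝓕 h𝓕, LinearIsometryEquiv.apply_symm_apply]
    rw [hqB, hqB, h1, LinearIsometryEquiv.symm_apply_apply, transLp_adj, hAdef,
      hcov t _ measurableSet_Ici]
    have h2 : (· + t) '' Set.Ici a = Set.Ici (a + t) := by simp
    rw [h2]
    exact E.mono_Ici a t ht _
  have h := core B hBpos hV T hT Tt hTt (𝓕 φ)
  rw [hqB, hqB, LinearIsometryEquiv.symm_apply_apply] at h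
  exact h
end
end

section
/- Let φ ∈ L²(ℝ) satisfy (Fφ)(k) = 0 for almost all k > 0, and let a ∈ ℝ. For t ∈ ℝ define φ_t := F*(k ↦ e^{-itk²}(Fφ)(k)). Then lim_{t→+∞} ∫_{[a,∞)} |φ_t(x)|² dx = 0; that is, s-lim_{t→∞} E^Q([a,∞)) e^{-itH₀} P̌₋ = 0, where E^Q([a,∞)) is multiplication by the characteristic function of [a,∞) and P̌₋ is the projection onto states with Fourier transform supported in (−∞,0]. -/
open MeasureTheory Complex Filter Set
open scoped ENNReal NNReal

noncomputable section

lemma aux_osc (g : ℝ → ℝ) (hg : ContDiff ℝ 1 g) (c d a : ℝ) (hcd : c ≤ d) (hd : d < 0)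
    (hgc : g c = 0) (hgd : g d = 0) (hsupp : Function.support g ⊆ Set.Ioc c d) :
    ∃ C : ℝ, 0 ≤ C ∧ ∀ t : ℝ, 1 ≤ t → |a| / (-d) ≤ t → ∀ x : ℝ, a ≤ x →
      ‖∫ k : ℝ, Complex.exp (Complex.I * x * k) *
        (Complex.exp (-(Complex.I * t * k ^ 2)) * (g k : ℂ))‖ ≤ C / (x - a + t * (-d)) := by
  have hdg : Continuous (deriv g) := hg.continuous_deriv le_rfl
  obtain ⟨G0, hG0⟩ := (isCompact_Icc (a := c) (b := d)).exists_bound_of_continuousOn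
    hg.continuous.continuousOn
  obtain ⟨G1, hG1⟩ := (isCompact_Icc (a := c) (b := d)).exists_bound_of_continuousOn
    hdg.continuousOn
  have hG0' : 0 ≤ G0 := (norm_nonneg _).trans (hG0 c ⟨le_rfl, hcd⟩)
  have hG1' : 0 ≤ G1 := (norm_nonneg _).trans (hG1 c ⟨le_rfl, hcd⟩)
  have hd' : 0 < -d := by linarith
  refine ⟨(G1 + 2 * G0 / (-d)) * (d - c), by
    have : 0 ≤ d - c := by linarith
    positivity, ?_⟩
  intro t ht1 hta x hx
  have hta' : |a| ≤ t * (-d) := (div_le_iff₀ hd').1 hta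
  have hna := neg_abs_le a
  have htd : 0 < t * (-d) := by positivity
  set M : ℝ := x - a + t * (-d) with hM
  have hMpos : 0 < M := by rw [hM]; linarith
  have hMt : t * (-d) ≤ M := by rw [hM]; linarith
  have hD : ∀ k ∈ Set.uIcc c d, M ≤ x - 2 * t * k := by
    intro k hk
    rw [Set.uIcc_of_le hcd] at hk
    have : t * k ≤ t * d := mul_le_mul_of_nonneg_left hk.2 (by linarith)
    rw [hM]; linarith
  have hD0 : ∀ k ∈ Set.uIcc c d, x - 2 * t * k ≠ 0 := fun k hk =>
    (hMpos.trans_le (hD k hk)).ne'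
  let E : ℝ → ℂ := fun k => Complex.exp (Complex.I * ((x * k - t * k ^ 2 : ℝ) : ℂ))
  let E' : ℝ → ℂ := fun k => E k * (Complex.I * ((x - 2 * t * k : ℝ) : ℂ))
  let u : ℝ → ℝ := fun k => g k / (x - 2 * t * k)
  let u' : ℝ → ℝ := fun k =>
    (deriv g k * (x - 2 * t * k) - g k * (-(2 * t))) / (x - 2 * t * k) ^ 2
  have hE : ∀ k, HasDerivAt E (E' k) k := by
    intro k
    have h1 : HasDerivAt (fun k : ℝ => x * k - t * k ^ 2) (x - 2 * t * k) k := by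
      have := ((hasDerivAt_id k).const_mul x).sub (((hasDerivAt_id k).pow 2).const_mul t)
      refine this.congr_deriv ?_
      simp; ring
    exact (h1.ofReal_comp.const_mul Complex.I).cexp
  have hu : ∀ k ∈ Set.uIcc c d, HasDerivAt u (u' k) k := by
    intro k hk
    have h1 : HasDerivAt (fun k : ℝ => x - 2 * t * k) (-(2 * t)) k := by
      have := ((hasDerivAt_id k).const_mul (2 * t)).const_sub x
      refine this.congr_deriv ?_
      simp
    exact ((hg.differentiable one_ne_zero) k).hasDerivAt.div h1 (hD0 k hk)
  have hEc : Continuous E := by fun_prop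
  have hE'c : Continuous E' := by fun_prop
  have hu'c : ContinuousOn u' (Set.uIcc c d) := by
    have := hg.continuous
    refine ContinuousOn.div (by fun_prop) (by fun_prop) ?_
    intro k hk
    exact pow_ne_zero _ (hD0 k hk)
  have hibp := intervalIntegral.integral_mul_deriv_eq_deriv_mul
    (u := fun k => (u k : ℂ)) (v := E) (u' := fun k => (u' k : ℂ)) (v' := E') (a := c) (b := d)
    (fun k hk => (hu k hk).ofReal_comp) (fun k _ => hE k)
    ((Complex.continuous_ofReal.comp_continuousOn hu'c).intervalIntegrable)
    (hE'c.intervalIntegrable _ _)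
  have h1 : (∫ k : ℝ, Complex.exp (Complex.I * x * k) *
        (Complex.exp (-(Complex.I * t * k ^ 2)) * (g k : ℂ))) =
      ∫ k in c..d, (g k : ℂ) * E k := by
    rw [intervalIntegral.integral_of_le hcd, ← setIntegral_eq_integral_of_forall_compl_eq_zero (s := Set.Ioc c d)]
    · congr 1
      ext k
      simp only [E]
      rw [← mul_assoc, ← Complex.exp_add, mul_comm]
      congr 2
      push_cast; ring
    · intro k hk
      have : g k = 0 := by
        by_contra h
        exact hk (hsupp h)
      simp [this]
  have h2 : (∫ k in c..d, (u k : ℂ) * E' k) = Complex.I * ∫ k in c..d, (g k : ℂ) * E k := by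
    rw [← intervalIntegral.integral_const_mul]
    refine intervalIntegral.integral_congr fun k hk => ?_
    have := hD0 k hk
    have h3 : u k * (x - 2 * t * k) = g k := by simp only [u]; field_simp
    have h4 : (u k : ℂ) * ((x - 2 * t * k : ℝ) : ℂ) = g k := by rw [← h3]; push_cast; ring
    simp only [E']
    rw [← h4]; ring
  have h3 : ‖∫ k in c..d, (u k : ℂ) * E' k‖ ≤ ((G1 + 2 * G0 / (-d)) / M) * |d - c| := by
    rw [hibp]
    simp only [u, hgc, hgd, zero_div, Complex.ofReal_zero, zero_mul, sub_zero, zero_sub, norm_neg]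
    refine intervalIntegral.norm_integral_le_of_norm_le_const fun k hk => ?_
    have hk' : k ∈ Set.uIcc c d := Set.uIoc_subset_uIcc hk
    have hkI : k ∈ Set.Icc c d := by rwa [Set.uIcc_of_le hcd] at hk'
    have hEn : ‖E k‖ = 1 := by
      simp only [E]; rw [mul_comm]; exact Complex.norm_exp_ofReal_mul_I _
    rw [norm_mul, hEn, mul_one, Complex.norm_real]
    have hDk := hD k hk'
    set D := x - 2 * t * k with hDdef
    have hDpos : 0 < D := hMpos.trans_le hDk
    have e1 : u' k = deriv g k / D + g k * (2 * t) / D ^ 2 := by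
      simp only [u', ← hDdef]; field_simp; ring
    rw [e1]
    have b1 : ‖deriv g k / D‖ ≤ G1 / M := by
      rw [norm_div, Real.norm_of_nonneg hDpos.le]
      exact div_le_div₀ hG1' (hG1 k hkI) hMpos hDk
    have b2 : ‖g k * (2 * t) / D ^ 2‖ ≤ G0 * (2 * t) / (M * (t * (-d))) := by
      rw [norm_div, norm_mul, Real.norm_of_nonneg (by positivity : 0 ≤ D ^ 2),
        Real.norm_of_nonneg (by positivity : 0 ≤ 2 * t)]
      refine div_le_div₀ (by positivity) ?_ (by positivity) ?_
      · exact mul_le_mul_of_nonneg_right (hG0 k hkI) (by positivity)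
      · rw [pow_two]
        exact mul_le_mul hDk (hMt.trans hDk) htd.le hDpos.le
    have e2 : G0 * (2 * t) / (M * (t * (-d))) = (2 * G0 / (-d)) / M := by
      have : t ≠ 0 := by positivity
      field_simp
    calc _ ≤ _ := norm_add_le _ _
      _ ≤ G1 / M + (2 * G0 / (-d)) / M := by rw [← e2]; exact add_le_add b1 b2
      _ = _ := by ring
  rw [h1]
  rw [h2, norm_mul, Complex.norm_I, one_mul, abs_of_nonneg (by linarith)] at h3
  refine h3.trans (le_of_eq ?_)
  ring

lemma aux_mul_memLp (e : ℝ → ℂ) (he : Continuous e) (hn : ∀ k, ‖e k‖ = 1) (f : H2) :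
    MemLp (fun x => e x * f x) 2 volume := by
  refine (Lp.memLp f).congr_norm ?_ ?_
  · exact he.aestronglyMeasurable.mul (Lp.aestronglyMeasurable f)
  · exact Eventually.of_forall fun x => by simp [hn]

lemma aux_mulLp_coe (e : ℝ → ℂ) (he : Continuous e) (hn : ∀ k, ‖e k‖ = 1) (f : H2) :
    (mulLp e f : ℝ → ℂ) =ᵐ[volume] fun x => e x * f x := by
  unfold mulLp
  rw [dif_pos (aux_mul_memLp e he hn f)]
  exact MemLp.coeFn_toLp _

lemma aux_mulLp_add (e : ℝ → ℂ) (he : Continuous e) (hn : ∀ k, ‖e k‖ = 1) (f g : H2) :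
    mulLp e (f + g) = mulLp e f + mulLp e g := by
  apply Lp.ext
  filter_upwards [aux_mulLp_coe e he hn f, aux_mulLp_coe e he hn g, aux_mulLp_coe e he hn (f + g),
    Lp.coeFn_add f g, Lp.coeFn_add (mulLp e f) (mulLp e g)] with x h1 h2 h3 h4 h5
  rw [h3, h5, h4]
  simp [h1, h2, mul_add]

lemma aux_mulLp_smul (e : ℝ → ℂ) (he : Continuous e) (hn : ∀ k, ‖e k‖ = 1) (c : ℂ) (f : H2) :
    mulLp e (c • f) = c • mulLp e f := by
  apply Lp.ext
  filter_upwards [aux_mulLp_coe e he hn f, aux_mulLp_coe e he hn (c • f),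
    Lp.coeFn_smul c f, Lp.coeFn_smul c (mulLp e f)] with x h1 h3 h4 h5
  rw [h3, h5, h4]
  simp [h1]; ring

lemma aux_mulLp_norm (e : ℝ → ℂ) (he : Continuous e) (hn : ∀ k, ‖e k‖ = 1) (f : H2) :
    ‖mulLp e f‖ = ‖f‖ := by
  rw [Lp.norm_def, Lp.norm_def]
  congr 1
  apply eLpNorm_congr_norm_ae
  filter_upwards [aux_mulLp_coe e he hn f] with x h1
  rw [h1]; simp [hn]

/-- the free phase -/
def ph (t : ℝ) : ℝ → ℂ := fun k : ℝ => Complex.exp (-(Complex.I * t * k ^ 2))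

lemma ph_cont (t : ℝ) : Continuous (ph t) := by unfold ph; fun_prop

lemma ph_norm (t k : ℝ) : ‖ph t k‖ = 1 := by
  unfold ph
  have : -(Complex.I * t * k ^ 2) = ((-(t * k ^ 2) : ℝ) : ℂ) * Complex.I := by push_cast; ring
  rw [this]; exact Complex.norm_exp_ofReal_mul_I _

/-- evolution followed by restriction -/
def Tt (𝓕 : H2 ≃ₗᵢ[ℂ] H2) (a t : ℝ) (f : H2) : Lp ℂ 2 (volume.restrict (Set.Ici a)) :=
  LpToLpRestrictCLM ℝ ℂ ℂ volume 2 (Set.Ici a) (𝓕.symm (mulLp (ph t) f))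

lemma Tt_add (𝓕 : H2 ≃ₗᵢ[ℂ] H2) (a t : ℝ) (f g : H2) :
    Tt 𝓕 a t (f + g) = Tt 𝓕 a t f + Tt 𝓕 a t g := by
  unfold Tt
  rw [aux_mulLp_add _ (ph_cont t) (ph_norm t), map_add, map_add]

lemma Tt_smul (𝓕 : H2 ≃ₗᵢ[ℂ] H2) (a t : ℝ) (c : ℂ) (f : H2) :
    Tt 𝓕 a t (c • f) = c • Tt 𝓕 a t f := by
  unfold Tt
  rw [aux_mulLp_smul _ (ph_cont t) (ph_norm t), map_smul, map_smul]

lemma Tt_norm_sq (𝓕 : H2 ≃ₗᵢ[ℂ] H2) (a t : ℝ) (f : H2) :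
    ‖Tt 𝓕 a t f‖ ^ 2 = ∫ x in Set.Ici a, ‖(𝓕.symm (mulLp (ph t) f)) x‖ ^ 2 := by
  have h := L2.inner_def (𝕜 := ℂ) (Tt 𝓕 a t f) (Tt 𝓕 a t f)
  rw [inner_self_eq_norm_sq_to_K] at h
  have h2 : (∫ x in Set.Ici a, inner ℂ (Tt 𝓕 a t f x) (Tt 𝓕 a t f x)) =
      ((∫ x in Set.Ici a, ‖(𝓕.symm (mulLp (ph t) f)) x‖ ^ 2 : ℝ) : ℂ) := by
    rw [← integral_complex_ofReal]
    apply integral_congr_ae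
    filter_upwards [LpToLpRestrictCLM_coeFn ℂ (Set.Ici a) (𝓕.symm (mulLp (ph t) f))] with x hx
    have hx' : Tt 𝓕 a t f x = (𝓕.symm (mulLp (ph t) f)) x := hx
    rw [hx', inner_self_eq_norm_sq_to_K]
    simp
  rw [h2] at h
  apply Complex.ofReal_injective
  rw [← h]
  simp

lemma Tt_norm_le (𝓕 : H2 ≃ₗᵢ[ℂ] H2) (a t : ℝ) (f : H2) : ‖Tt 𝓕 a t f‖ ≤ ‖f‖ := by
  rw [← aux_mulLp_norm _ (ph_cont t) (ph_norm t) f, ← 𝓕.symm.norm_map]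
  rw [Lp.norm_def, Lp.norm_def]
  apply ENNReal.toReal_mono (Lp.eLpNorm_ne_top _)
  unfold Tt
  rw [eLpNorm_congr_ae (LpToLpRestrictCLM_coeFn ℂ (Set.Ici a) (𝓕.symm (mulLp (ph t) f)))]
  exact eLpNorm_mono_measure _ Measure.restrict_le_self

/-- states escaping from `[a,∞)` -/
def KK (𝓕 : H2 ≃ₗᵢ[ℂ] H2) (a : ℝ) : Submodule ℂ H2 where
  carrier := {f | Tendsto (fun t : ℝ => Tt 𝓕 a t f) atTop (nhds 0)}
  add_mem' := by
    intro f g hf hg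
    simp only [Set.mem_setOf_eq, Tt_add] at *
    simpa using hf.add hg
  zero_mem' := by
    have : ∀ t, Tt 𝓕 a t 0 = 0 := fun t => by simpa using Tt_smul 𝓕 a t 0 0
    simp [this]
  smul_mem' := by
    intro c f hf
    simp only [Set.mem_setOf_eq, Tt_smul] at *
    simpa using hf.const_smul c

lemma KK_closed (𝓕 : H2 ≃ₗᵢ[ℂ] H2) (a : ℝ) : IsClosed (KK 𝓕 a : Set H2) := by
  refine isClosed_of_closure_subset fun f hf => ?_
  change Tendsto (fun t : ℝ => Tt 𝓕 a t f) atTop (nhds 0)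
  rw [Metric.tendsto_nhds]
  intro ε hε
  obtain ⟨g, hg, hfg⟩ := Metric.mem_closure_iff.1 hf (ε / 2) (by positivity)
  have hg' : Tendsto (fun t : ℝ => Tt 𝓕 a t g) atTop (nhds 0) := hg
  filter_upwards [(Metric.tendsto_nhds.1 hg') (ε / 2) (by positivity)] with t ht
  rw [dist_zero_right] at ht ⊢
  have h1 : Tt 𝓕 a t f = Tt 𝓕 a t (f - g) + Tt 𝓕 a t g := by rw [← Tt_add]; simp
  have h2 := Tt_norm_le 𝓕 a t (f - g)
  rw [dist_eq_norm] at hfg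
  rw [h1]
  linarith [norm_add_le (Tt 𝓕 a t (f - g)) (Tt 𝓕 a t g)]

lemma aux_int (a s : ℝ) (hs : 0 < s) :
    IntegrableOn (fun x : ℝ => 1 / (x - a + s) ^ 2) (Set.Ioi a) ∧
    ∫ x in Set.Ioi a, 1 / (x - a + s) ^ 2 = 1 / s := by
  have hder : ∀ x ∈ Set.Ici a, HasDerivAt (fun x : ℝ => -(x - a + s)⁻¹) (1 / (x - a + s) ^ 2) x := by
    intro x hx
    have hx' : a ≤ x := hx
    have h0 : x - a + s ≠ 0 := by linarith
    have h := ((((hasDerivAt_id x).sub_const a).add_const s).fun_inv h0).neg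
    refine h.congr_deriv ?_
    simp [neg_div]
  have hlim : Tendsto (fun x : ℝ => -(x - a + s)⁻¹) atTop (nhds 0) := by
    rw [← neg_zero]
    refine (tendsto_inv_atTop_zero.comp ?_).neg
    refine tendsto_atTop_add_const_right _ _ ?_
    exact tendsto_atTop_add_const_right _ (-a) tendsto_id
  refine ⟨integrableOn_Ioi_deriv_of_nonneg' hder (fun x _ => by positivity) hlim, ?_⟩
  rw [integral_Ioi_of_hasDerivAt_of_nonneg' hder (fun x _ => by positivity) hlim]
  simp

lemma aux_test (𝓕 : H2 ≃ₗᵢ[ℂ] H2) (h𝓕 : IsFourier 𝓕) (a : ℝ) (g : ℝ → ℝ)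
    (hg : ContDiff ℝ 1 g) (hgc : HasCompactSupport g) (hgs : tsupport g ⊆ Set.Iio 0)
    (G : H2) (hG : (G : ℝ → ℂ) =ᵐ[volume] fun x => (g x : ℂ)) : G ∈ KK 𝓕 a := by
  obtain ⟨c, d, hcd, hd, hsupp⟩ : ∃ c d : ℝ, c ≤ d ∧ d < 0 ∧ tsupport g ⊆ Set.Ioo c d := by
    rcases (tsupport g).eq_empty_or_nonempty with h | h
    · exact ⟨-1, -1, le_rfl, by norm_num, by simp [h]⟩
    · obtain ⟨m, hm, hm'⟩ := hgc.isCompact.exists_isLeast h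
      obtain ⟨M, hM, hM'⟩ := hgc.isCompact.exists_isGreatest h
      have h1 : M < 0 := hgs hM
      have h2 : m ≤ M := hm' hM
      exact ⟨m - 1, M / 2, by linarith, by linarith, fun x hx =>
        ⟨by linarith [hm' hx], by linarith [hM' hx]⟩⟩
  have hz : ∀ x, x ∉ Set.Ioo c d → g x = 0 := fun x hx =>
    image_eq_zero_of_notMem_tsupport fun h => hx (hsupp h)
  obtain ⟨C, hC, hbound⟩ := aux_osc g hg c d a hcd hd (hz c (by simp)) (hz d (by simp))
    ((subset_tsupport g).trans (hsupp.trans Set.Ioo_subset_Ioc_self))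
  have hd' : 0 < -d := by linarith
  have hgint : Integrable (fun x => (g x : ℂ)) volume :=
    (hg.continuous.integrable_of_hasCompactSupport hgc).ofReal
  change Tendsto (fun t : ℝ => Tt 𝓕 a t G) atTop (nhds 0)
  rw [tendsto_zero_iff_norm_tendsto_zero]
  have hsq : Tendsto (fun t : ℝ => ‖Tt 𝓕 a t G‖ ^ 2) atTop (nhds 0) := by
    set q : ℝ := ‖(Real.sqrt (2 * Real.pi) : ℂ)⁻¹‖ with hq
    have hlim : Tendsto (fun t : ℝ => (q * C) ^ 2 * (1 / (t * (-d)))) atTop (nhds 0) := by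
      have : Tendsto (fun t : ℝ => 1 / (t * (-d))) atTop (nhds 0) := by
        simp only [one_div]
        exact tendsto_inv_atTop_zero.comp (tendsto_id.atTop_mul_const hd')
      simpa using this.const_mul ((q * C) ^ 2)
    refine squeeze_zero' (Eventually.of_forall fun t => by positivity) ?_ hlim
    filter_upwards [eventually_ge_atTop 1, eventually_ge_atTop (|a| / (-d))] with t ht1 hta
    have hs : 0 < t * (-d) := by positivity
    obtain ⟨hi, hie⟩ := aux_int a (t * (-d)) hs
    have hco : (mulLp (ph t) G : ℝ → ℂ) =ᵐ[volume] fun x => ph t x * (g x : ℂ) := by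
      filter_upwards [aux_mulLp_coe _ (ph_cont t) (ph_norm t) G, hG] with x h1 h2
      rw [h1, h2]
    have hint : Integrable (mulLp (ph t) G : ℝ → ℂ) volume := by
      refine Integrable.congr ?_ hco.symm
      exact ((ph_cont t).mul (Complex.continuous_ofReal.comp hg.continuous)).integrable_of_hasCompactSupport
        ((hgc.comp_left (g := Complex.ofReal) (by simp)).mul_left)
    have hF := h𝓕.2 _ hint
    rw [Tt_norm_sq, integral_Ici_eq_integral_Ioi, ← hie, ← integral_const_mul]
    refine integral_mono_of_nonneg (Eventually.of_forall fun x => by positivity)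
      (hi.const_mul _) ?_
    filter_upwards [ae_restrict_of_ae hF, ae_restrict_mem measurableSet_Ioi] with x hx hxa
    have hxa' : a < x := hxa
    have e : (∫ k : ℝ, Complex.exp (Complex.I * x * k) * (mulLp (ph t) G) k) =
        ∫ k : ℝ, Complex.exp (Complex.I * x * k) *
        (Complex.exp (-(Complex.I * t * k ^ 2)) * (g k : ℂ)) := by
      apply integral_congr_ae
      filter_upwards [hco] with k hk
      rw [hk]; rfl
    have hb := hbound t ht1 hta x hxa'.le
    rw [hx, e, norm_mul]
    have hpos : 0 < x - a + t * (-d) := by linarith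
    calc _ ≤ (q * (C / (x - a + t * (-d)))) ^ 2 := by gcongr
      _ = _ := by field_simp
  have := hsq.sqrt
  simpa [Real.sqrt_sq] using this

lemma aux_mem (𝓕 : H2 ≃ₗᵢ[ℂ] H2) (h𝓕 : IsFourier 𝓕) (a : ℝ) (f : H2)
    (hf : ∀ᵐ k ∂(volume.restrict (Set.Ioi (0 : ℝ))), f k = 0) : f ∈ KK 𝓕 a := by
  haveI : CompleteSpace (KK 𝓕 a) := (KK_closed 𝓕 a).completeSpace_coe
  rw [← (KK 𝓕 a).orthogonal_orthogonal, Submodule.mem_orthogonal]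
  intro v hv
  rw [Submodule.mem_orthogonal] at hv
  have hvz : ∀ᵐ x ∂(volume : Measure ℝ), x ∈ Set.Iio (0 : ℝ) → v x = 0 := by
    refine isOpen_Iio.ae_eq_zero_of_integral_contDiff_smul_eq_zero ?_ ?_
    · exact ((Lp.memLp v).locallyIntegrable (by norm_num)).locallyIntegrableOn _
    · intro g hg hgc hgs
      have hm : MemLp (fun x => (g x : ℂ)) 2 volume :=
        (Complex.continuous_ofReal.comp hg.continuous).memLp_of_hasCompactSupport
          (hgc.comp_left (g := Complex.ofReal) (by simp))
      have h := hv (hm.toLp _) (aux_test 𝓕 h𝓕 a g (hg.of_le (by exact_mod_cast le_top)) hgc hgs _ hm.coeFn_toLp)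
      rw [L2.inner_def] at h
      rw [← h]
      apply integral_congr_ae
      filter_upwards [hm.coeFn_toLp] with x hx
      rw [hx]
      simp [mul_comm]
  rw [L2.inner_def]
  rw [ae_restrict_iff' measurableSet_Ioi] at hf
  rw [integral_eq_zero_of_ae]
  filter_upwards [hvz, hf, compl_mem_ae_iff.2 (measure_singleton (0 : ℝ))] with x h1 h2 h3
  rcases lt_trichotomy x 0 with h | h | h
  · simp [h1 h]
  · exact absurd h h3
  · simp [h2 h]

/-- Let `φ ∈ L²(ℝ)` have only non-positive momenta, `(Fφ)(k) = 0` for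
a.e. `k > 0`, and let `a ∈ ℝ`. With `φ_t := e^{-itH₀}φ = F*(e^{-itk²} Fφ)` the freely evolved
state, `∫_{[a,∞)} |φ_t(x)|² dx → 0` as `t → +∞`; that is,
`s-lim_{t→∞} E^Q([a,∞)) e^{-itH₀} P̌₋ = 0`. -/
theorem statement11 (𝓕 : H2 ≃ₗᵢ[ℂ] H2) (h𝓕 : IsFourier 𝓕) (φ : H2)
    (hφ : ∀ᵐ k ∂(volume.restrict (Set.Ioi (0 : ℝ))), (𝓕 φ) k = 0) (a : ℝ) :
    Tendsto (fun t : ℝ => ∫ x in Set.Ici a,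
        ‖(𝓕.symm (mulLp (fun k : ℝ => Complex.exp (-(Complex.I * t * k ^ 2))) (𝓕 φ))) x‖ ^ 2)
      atTop (nhds 0) := by
  have h : Tendsto (fun t : ℝ => Tt 𝓕 a t (𝓕 φ)) atTop (nhds 0) := aux_mem 𝓕 h𝓕 a _ hφ
  have h2 := (tendsto_zero_iff_norm_tendsto_zero.1 h).pow 2
  simp only [Tt_norm_sq] at h2
  rw [zero_pow two_ne_zero] at h2
  exact h2
end
end
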